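/- Let q be a prime power with q ≥ 4 and let P be a closed point of degree 3 of P² over F_q not contained in any F_q-rational line, given by a point p ∈ P²(F_{q³}) whose Frobenius orbit {p, φ(p), φ²(p)} has exactly 3 elements, these three points being non-collinear. Then there exists a nonzero homogeneous polynomial f ∈ F_q[x,y,z] of degree 4 vanishing at p such that the number of points [a:b:c] ∈ P²(F_q) with f(a,b,c) = 0 is exactly 3q + 2. -/

import Mathlib

/-!
The quartic is a conic through `v` times two lines that miss the conic over `F_q`. A conic has
`q + 1` rational points and two distinct lines cover `2q + 1`, which gives `3q + 2` in all.

If `α` generates the cubic extension, then `(1, α, α²)` lies on the conic `y² = xz`. The coordinates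
of a degree-3 point off all rational lines are a basis of the extension, so a rational change of
coordinates moves that point to `(1, α, α²)`. The line `z + by + cx = 0` misses the rational points
of the conic exactly when `t² + bt + c` has no root. For `b ≠ 0` such a `c` exists because
`t ↦ t² + bt` takes the same value at `0` and `-b`, hence is not surjective. Two nonzero values of
`b` are available as soon as `q ≥ 3`.
-/

open MvPolynomial

noncomputable section

open Module Matrix Configuration
open scoped LinearAlgebra.Projectivization

lemma eval_smul_of_isHomogeneous {σ R : Type*} [CommSemiring R] {f : MvPolynomial σ R} {n : ℕ}
    (hf : f.IsHomogeneous n) (c : R) (w : σ → R) : eval (c • w) f = c ^ n * eval w f := by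
  rw [eval_eq, eval_eq, Finset.mul_sum]
  refine Finset.sum_congr rfl fun d hd ↦ ?_
  have hdeg : ∑ i ∈ d.support, d i = n := (hf.degree_eq_sum_deg_support hd).symm
  simp only [Pi.smul_apply, smul_eq_mul, mul_pow, Finset.prod_mul_distrib,
    Finset.prod_pow_eq_pow_sum, hdeg]
  ring

section ProjectiveZeroLocus

variable {σ K : Type*} [Field K] {f g : MvPolynomial σ K} {n : ℕ}

/-- The set of rational points of projective space at which `f` vanishes. Vanishing is tested on
the chosen representative of a point, which is only meaningful for homogeneous `f`. -/
def projZeroLocus (f : MvPolynomial σ K) : Set (ℙ K (σ → K)) :=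
  {x | eval x.rep f = 0}

lemma mk_mem_projZeroLocus (hf : f.IsHomogeneous n) {w : σ → K} (hw : w ≠ 0) :
    Projectivization.mk K w hw ∈ projZeroLocus f ↔ eval w f = 0 := by
  obtain ⟨u, hu⟩ := Projectivization.exists_smul_eq_mk_rep K w hw
  rw [projZeroLocus, Set.mem_ofPred_eq, ← hu, Units.smul_def, eval_smul_of_isHomogeneous hf,
    mul_eq_zero_iff_left (pow_ne_zero n u.ne_zero)]

lemma projZeroLocus_mul : projZeroLocus (f * g) = projZeroLocus f ∪ projZeroLocus g := by
  ext x
  simp [projZeroLocus]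

lemma ne_zero_of_ncard_projZeroLocus_lt
    (h : (projZeroLocus f).ncard < Nat.card (ℙ K (σ → K))) : f ≠ 0 := by
  rintro rfl
  simp [projZeroLocus] at h

end ProjectiveZeroLocus

section ChangeOfCoordinates

lemma isHomogeneous_bind₁_toMvPolynomial {ι κ R : Type*} [Fintype κ] [CommSemiring R]
    {f : MvPolynomial ι R} {n : ℕ} (A : Matrix ι κ R) (hf : f.IsHomogeneous n) :
    (bind₁ A.toMvPolynomial f).IsHomogeneous n := by
  rw [← one_mul n]
  exact hf.aeval _ A.toMvPolynomial_isHomogeneous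

lemma eval_bind₁_toMvPolynomial {ι κ R : Type*} [Fintype κ] [CommSemiring R]
    (f : MvPolynomial ι R) (A : Matrix ι κ R) (w : κ → R) :
    eval w (bind₁ A.toMvPolynomial f) = eval (A *ᵥ w) f := by
  simp only [← aeval_eq_eval, aeval_bind₁]
  simp only [aeval_eq_eval, toMvPolynomial_eval_eq_apply]

lemma aeval_toMvPolynomial_toMatrix {ι κ R S : Type*} [Fintype ι] [CommRing R] [CommRing S]
    [Algebra R S] (b : Basis ι R S) (v : κ → S) (j : κ) :
    aeval b ((b.toMatrix v)ᵀ.toMvPolynomial j) = v j := by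
  rw [← b.sum_toMatrix_smul_self v j]
  simp [toMvPolynomial, aeval_monomial, Algebra.smul_def]

variable {ι K : Type*} [Fintype ι] [DecidableEq ι] [Field K] {f : MvPolynomial ι K} {n : ℕ}

lemma projZeroLocus_bind₁_toMvPolynomial (A : GL ι K) (hf : f.IsHomogeneous n) :
    projZeroLocus (bind₁ A.1.toMvPolynomial f) = (A • ·) ⁻¹' projZeroLocus f := by
  ext x
  induction x using Projectivization.ind with | h w hw =>
  rw [Set.mem_preimage, Projectivization.smul_mk, mk_mem_projZeroLocus hf,
    mk_mem_projZeroLocus (isHomogeneous_bind₁_toMvPolynomial _ hf), eval_bind₁_toMvPolynomial]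
  rfl

lemma ncard_projZeroLocus_bind₁_toMvPolynomial (A : GL ι K) (hf : f.IsHomogeneous n) :
    (projZeroLocus (bind₁ A.1.toMvPolynomial f)).ncard = (projZeroLocus f).ncard := by
  rw [projZeroLocus_bind₁_toMvPolynomial A hf, Set.preimage_smul, Set.ncard_smul_set]

end ChangeOfCoordinates

section Lines

lemma ncard_union_lines {P L : Type*} [Membership P L] [ProjectivePlane P L] [Finite P]
    [Finite L] {l m : L} (hlm : l ≠ m) :
    ({p | p ∈ l} ∪ {p | p ∈ m} : Set P).ncard = 2 * ProjectivePlane.order P L + 1 := by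
  have hcount (l : L) : {p : P | p ∈ l}.ncard = ProjectivePlane.order P L + 1 :=
    ProjectivePlane.pointCount_eq P l
  have hinter : ({p | p ∈ l} ∩ {p | p ∈ m} : Set P).ncard = 1 := by
    obtain ⟨p, hp, huniq⟩ := HasPoints.existsUnique_point P L l m hlm
    exact Set.ncard_eq_one.2 ⟨p, Set.eq_singleton_iff_unique_mem.2 ⟨hp, huniq⟩⟩
  have := Set.ncard_union_add_ncard_inter {p : P | p ∈ l} {p | p ∈ m}
  rw [hinter, hcount, hcount] at this
  lia

variable {K : Type*} [Field K]

lemma card_projectivePlane [Finite K] :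
    Nat.card (ℙ K (Fin 3 → K)) = Nat.card K ^ 2 + Nat.card K + 1 := by
  rw [Projectivization.card_of_finrank K _ (finrank_fin_fun K)]
  simp only [Finset.sum_range_succ, Finset.sum_range_zero]
  ring

lemma order_projectivePlane [Finite K] [DecidableEq K] :
    ProjectivePlane.order (ℙ K (Fin 3 → K)) (ℙ K (Fin 3 → K)) = Nat.card K := by
  have := Fintype.ofFinite (ℙ K (Fin 3 → K))
  have hcard := ProjectivePlane.card_points (ℙ K (Fin 3 → K)) (ℙ K (Fin 3 → K))
  rw [← Nat.card_eq_fintype_card, card_projectivePlane] at hcard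
  nlinarith

/-- The linear form with coefficient vector `c`. -/
def linearForm {σ R : Type*} [Fintype σ] [CommSemiring R] (c : σ → R) : MvPolynomial σ R :=
  ∑ i, C (c i) * X i

lemma isHomogeneous_linearForm {σ R : Type*} [Fintype σ] [CommSemiring R] (c : σ → R) :
    (linearForm c).IsHomogeneous 1 :=
  .sum _ _ _ fun i _ ↦ isHomogeneous_C_mul_X (c i) i

lemma eval_linearForm {σ R : Type*} [Fintype σ] [CommSemiring R] (c w : σ → R) :
    eval w (linearForm c) = c ⬝ᵥ w := by
  simp [linearForm, dotProduct]

lemma projZeroLocus_linearForm {c : Fin 3 → K} (hc : c ≠ 0) :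
    projZeroLocus (linearForm c) = {x | x ∈ Projectivization.mk K c hc} := by
  ext x
  induction x using Projectivization.ind with | h w hw =>
  rw [mk_mem_projZeroLocus (isHomogeneous_linearForm c), eval_linearForm, Set.mem_ofPred_eq,
    ofField.mem_iff, Projectivization.orthogonal_mk, dotProduct_comm]

lemma ncard_projZeroLocus_linearForm_union [Finite K] {c d : Fin 3 → K}
    (h : LinearIndependent K ![c, d]) :
    (projZeroLocus (linearForm c) ∪ projZeroLocus (linearForm d)).ncard = 2 * Nat.card K + 1 := by
  classical
  have hc : c ≠ 0 := h.ne_zero 0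
  have hd : d ≠ 0 := h.ne_zero 1
  have hne : Projectivization.mk K c hc ≠ Projectivization.mk K d hd := by
    rwa [Ne, Projectivization.mk_eq_mk_iff_crossProduct_eq_zero, ← Ne,
      crossProduct_ne_zero_iff_linearIndependent]
  rw [projZeroLocus_linearForm hc, projZeroLocus_linearForm hd, ncard_union_lines hne,
    order_projectivePlane]

end Lines

section Conic

variable (K : Type*)

/-- The equation `y² = xz` of the standard conic, in the coordinates `x = X 0`, `y = X 1`,
`z = X 2`. -/
def conic [CommRing K] : MvPolynomial (Fin 3) K := X 1 ^ 2 - X 0 * X 2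

lemma isHomogeneous_conic [CommRing K] : (conic K).IsHomogeneous 2 :=
  (isHomogeneous_X_pow 1 2).sub ((isHomogeneous_X K 0).mul (isHomogeneous_X K 2))

variable {K} [Field K]

/-- The point `[1 : t : t²]` of the conic. -/
def conicPoint (t : K) : ℙ K (Fin 3 → K) :=
  .mk K ![1, t, t ^ 2] fun h ↦ one_ne_zero (congrFun h 0)

variable (K) in
/-- The point `[0 : 0 : 1]`, the only one of the conic on the line `x = 0`. -/
def conicInfty : ℙ K (Fin 3 → K) :=
  .mk K ![0, 0, 1] fun h ↦ one_ne_zero (congrFun h 2)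

lemma conicPoint_injective : Function.Injective (conicPoint (K := K)) := by
  intro s t hst
  obtain ⟨u, hu⟩ := (Projectivization.mk_eq_mk_iff' ..).1 hst
  have hu₁ : u = 1 := by simpa using congrFun hu 0
  simpa [hu₁] using (congrFun hu 1).symm

lemma conicInfty_notMem_range : conicInfty K ∉ Set.range conicPoint := by
  rintro ⟨t, ht⟩
  obtain ⟨u, hu⟩ := (Projectivization.mk_eq_mk_iff' ..).1 ht
  simpa using congrFun hu 0

lemma projZeroLocus_conic :
    projZeroLocus (conic K) = insert (conicInfty K) (Set.range conicPoint) := by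
  refine Set.Subset.antisymm (fun x hx ↦ ?_) (Set.insert_subset ?_ (Set.range_subset_iff.2 ?_))
  · induction x using Projectivization.ind with | h w hw =>
    rw [mk_mem_projZeroLocus (isHomogeneous_conic K)] at hx
    have hconic : w 1 ^ 2 = w 0 * w 2 := by simpa [conic, sub_eq_zero] using hx
    by_cases h₀ : w 0 = 0
    · have h₁ : w 1 = 0 := by simpa [h₀] using hconic
      refine .inl ((Projectivization.mk_eq_mk_iff' ..).2 ⟨w 2, ?_⟩)
      ext i; fin_cases i <;> simp [h₀, h₁]
    · refine .inr ⟨w 1 / w 0, (Projectivization.mk_eq_mk_iff' ..).2 ⟨(w 0)⁻¹, ?_⟩⟩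
      ext i; fin_cases i
      · simp [h₀]
      · simp [div_eq_inv_mul]
      · simp only [Fin.reduceFinMk, Pi.smul_apply, smul_eq_mul, cons_val, div_pow, hconic]
        field_simp
  · rw [conicInfty, mk_mem_projZeroLocus (isHomogeneous_conic K)]
    simp [conic]
  · intro t
    rw [conicPoint, mk_mem_projZeroLocus (isHomogeneous_conic K)]
    simp [conic]

lemma ncard_projZeroLocus_conic [Finite K] : (projZeroLocus (conic K)).ncard = Nat.card K + 1 := by
  rw [projZeroLocus_conic, Set.ncard_insert_of_notMem conicInfty_notMem_range,
    Set.ncard_range_of_injective conicPoint_injective]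

lemma disjoint_projZeroLocus_conic_linearForm {b c : K} (h : ∀ t, t ^ 2 + b * t + c ≠ 0) :
    Disjoint (projZeroLocus (conic K)) (projZeroLocus (linearForm ![c, b, 1])) := by
  rw [projZeroLocus_conic, Set.disjoint_left]
  rintro _ (rfl | ⟨t, rfl⟩)
  · simp [conicInfty, mk_mem_projZeroLocus (isHomogeneous_linearForm _), eval_linearForm]
  · have hdot : ![c, b, 1] ⬝ᵥ ![1, t, t ^ 2] = t ^ 2 + b * t + c := by
      simp only [dotProduct, Fin.sum_univ_three, cons_val]
      ring
    rw [conicPoint, mk_mem_projZeroLocus (isHomogeneous_linearForm _), eval_linearForm, hdot]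
    exact h t

end Conic

section SkewLines

lemma exists_forall_quadratic_ne_zero {R : Type*} [CommRing R] [Finite R] {b : R} (hb : b ≠ 0) :
    ∃ c, ∀ t : R, t ^ 2 + b * t + c ≠ 0 := by
  have hninj : ¬ Function.Injective fun t : R ↦ t ^ 2 + b * t := fun h ↦
    hb (neg_eq_zero.1 (h (show (-b) ^ 2 + b * -b = 0 ^ 2 + b * 0 by ring)))
  rw [Finite.injective_iff_surjective, Function.Surjective] at hninj
  push Not at hninj
  obtain ⟨c, hc⟩ := hninj
  exact ⟨-c, fun t ht ↦ hc t (add_neg_eq_zero.1 ht)⟩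

variable {K : Type*} [Field K] [Finite K]

lemma exists_linearForms_disjoint_conic (hK : 3 ≤ Nat.card K) :
    ∃ l m : Fin 3 → K, LinearIndependent K ![l, m] ∧
      Disjoint (projZeroLocus (conic K)) (projZeroLocus (linearForm l)) ∧
      Disjoint (projZeroLocus (conic K)) (projZeroLocus (linearForm m)) := by
  have : Nontrivial Kˣ := Finite.one_lt_card_iff_nontrivial.1 (by rw [Nat.card_units]; lia)
  obtain ⟨b, b', hbb'⟩ := exists_pair_ne Kˣ
  obtain ⟨c, hc⟩ := exists_forall_quadratic_ne_zero b.ne_zero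
  obtain ⟨c', hc'⟩ := exists_forall_quadratic_ne_zero b'.ne_zero
  refine ⟨![c, b, 1], ![c', b', 1], LinearIndependent.pair_iff.2 fun s t hst ↦ ?_,
    disjoint_projZeroLocus_conic_linearForm hc, disjoint_projZeroLocus_conic_linearForm hc'⟩
  have h₁ : s * b + t * b' = 0 := by simpa using congrFun hst 1
  have h₂ : s + t = 0 := by simpa using congrFun hst 2
  have hs : s * (b - b' : K) = 0 := by linear_combination h₁ - b' * h₂
  have hs : s = 0 := (mul_eq_zero.1 hs).resolve_right (sub_ne_zero.2 (Units.val_injective.ne hbb'))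
  exact ⟨hs, by simpa [hs] using h₂⟩

lemma exists_linearForms_ncard_conic_mul (hK : 3 ≤ Nat.card K) :
    ∃ l m : Fin 3 → K,
      (projZeroLocus (conic K * (linearForm l * linearForm m))).ncard = 3 * Nat.card K + 2 := by
  obtain ⟨l, m, hlm, hl, hm⟩ := exists_linearForms_disjoint_conic hK
  refine ⟨l, m, ?_⟩
  rw [projZeroLocus_mul, projZeroLocus_mul,
    Set.ncard_union_eq (Set.disjoint_union_right.2 ⟨hl, hm⟩), ncard_projZeroLocus_conic,
    ncard_projZeroLocus_linearForm_union hlm]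
  ring

end SkewLines

lemma linearIndependent_of_conjugates {ι F R L : Type*} [Finite ι] [Field F] [Ring R] [Algebra F R]
    [Field L] [Algebra F L] {τ : ι → R →ₐ[F] L} {v : ι → R}
    (h : LinearIndependent L fun k i ↦ τ k (v i)) : LinearIndependent F v := by
  classical
  have := Fintype.ofFinite ι
  have hcols : LinearIndependent L fun i k ↦ τ k (v i) :=
    linearIndependent_cols_iff_isUnit.2
      (linearIndependent_rows_iff_isUnit (A := .of fun k i ↦ τ k (v i)).1 h)
  exact .of_comp (LinearMap.pi fun k ↦ (τ k).toLinearMap) (hcols.restrict_scalars' F)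

lemma finrank_eq_of_card_eq_pow {F V : Type*} [Field F] [Fintype F] [AddCommGroup V] [Module F V]
    [Fintype V] {n : ℕ} (h : Fintype.card V = Fintype.card F ^ n) : finrank F V = n :=
  Nat.pow_right_injective Fintype.one_lt_card (card_eq_pow_finrank.symm.trans h)

section CubicExtension

variable {F E : Type*} [Field F] [Field E] [Algebra F E]

lemma linearIndependent_of_frobenius_conjugates [Fintype F] {n : ℕ} {v : Fin n → E}
    (h : LinearIndependent E fun (k : Fin n) i ↦ v i ^ Fintype.card F ^ (k : ℕ)) :
    LinearIndependent F v :=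
  linearIndependent_of_conjugates
    (τ := fun k : Fin n ↦ FiniteField.frobeniusAlgHom F E ^ (k : ℕ)) <| by
    simpa only [AlgHom.coe_pow, FiniteField.coe_frobeniusAlgHom, pow_iterate] using h

lemma exists_generalLinear_aeval_conic [Algebra.IsSeparable F E] (hE : finrank F E = 3)
    {v : Fin 3 → E} (hv : LinearIndependent F v) :
    ∃ A : GL (Fin 3) F, aeval v (bind₁ A.1.toMvPolynomial (conic F)) = 0 := by
  have : FiniteDimensional F E := .of_finrank_pos (by lia)
  let b : Basis (Fin 3) F E := basisOfLinearIndependentOfCardEqFinrank hv (by simp [hE])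
  have hb : ⇑b = v := coe_basisOfLinearIndependentOfCardEqFinrank ..
  let pb := Field.powerBasisOfFiniteOfSeparable F E
  let b' : Basis (Fin 3) F E := pb.basis.reindex (finCongr (pb.finrank.symm.trans hE))
  have hb' (j : Fin 3) : b' j = pb.gen ^ (j : ℕ) := by simp [b']
  let := b.invertibleToMatrix b'
  refine ⟨unitOfInvertible (b.toMatrix b')ᵀ, ?_⟩
  simp only [val_unitOfInvertible, aeval_bind₁, ← hb, aeval_toMvPolynomial_toMatrix, hb']
  simp [conic]

end CubicExtension

theorem stmt_14_general {F E : Type*} [Field F] [Finite F] [Field E] [Algebra F E]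
    (hF : 3 ≤ Nat.card F) (hE : finrank F E = 3) {v : Fin 3 → E} (hv : LinearIndependent F v) :
    ∃ f : MvPolynomial (Fin 3) F, f ≠ 0 ∧ f.IsHomogeneous 4 ∧ aeval v f = 0 ∧
      {x : ℙ F (Fin 3 → F) | eval x.rep f = 0}.ncard = 3 * Nat.card F + 2 := by
  have : FiniteDimensional F E := .of_finrank_pos (by lia)
  obtain ⟨A, hA⟩ := exists_generalLinear_aeval_conic hE hv
  obtain ⟨l, m, hlm⟩ := exists_linearForms_ncard_conic_mul hF
  have hhom : (conic F * (linearForm l * linearForm m)).IsHomogeneous 4 :=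
    (isHomogeneous_conic F).mul ((isHomogeneous_linearForm l).mul (isHomogeneous_linearForm m))
  have hcard := (ncard_projZeroLocus_bind₁_toMvPolynomial A hhom).trans hlm
  refine ⟨_, ne_zero_of_ncard_projZeroLocus_lt ?_, isHomogeneous_bind₁_toMvPolynomial _ hhom,
    ?_, hcard⟩
  · rw [hcard, card_projectivePlane]
    nlinarith
  · rw [map_mul, map_mul, hA, zero_mul]

/-- For `q ≥ 4`, the bound `3q + 2` is attained by some plane quartic over `F_q` passing
through the degree-3 closed point. -/
theorem stmt_14 (q : ℕ) (hq : IsPrimePow q) (hq4 : 4 ≤ q)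
    (F E : Type) [Field F] [Fintype F] [Field E] [Fintype E] [Algebra F E]
    (hF : Fintype.card F = q) (hE : Fintype.card E = q ^ 3)
    -- `v` represents a degree-3 closed point of `P²`: its three Frobenius conjugates are
    -- pairwise distinct and non-collinear (equivalently, linearly independent).
    (v : Fin 3 → E)
    (hv : LinearIndependent E ![v, fun i => v i ^ q, fun i => v i ^ q ^ 2]) :
    ∃ f : MvPolynomial (Fin 3) F, f ≠ 0 ∧ f.IsHomogeneous 4 ∧
      MvPolynomial.aeval v f = 0 ∧
      {x : Projectivization F (Fin 3 → F) | MvPolynomial.eval x.rep f = 0}.ncard = 3 * q + 2 := by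
  subst hF
  simpa only [Nat.card_eq_fintype_card] using stmt_14_general (by simp; lia)
    (finrank_eq_of_card_eq_pow hE) (linearIndependent_of_frobenius_conjugates (by
      convert hv with k; fin_cases k <;> simp))
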